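/- On the event E, suppose the noise-stability bound (NS) holds at iteration t, and suppose the signal weights satisfy w_{r,1}^{(t)} ≤ C_0/(α m^{1/3}) for all filters r ∈ [m], where C_0 > 0 is a sufficiently large absolute constant. Then, under Condition (H), for every learnable sample i ∈ S_L the negative sigmoid of the adversarial margin satisfies 1/(1 + exp(2C_0³)) ≤ ψ(y_i f_{W^{(t)}}(X̃_i^{(t)})) ≤ 1. -/

import Mathlib

open Finset MeasureTheory ProbabilityTheory
open scoped ENNReal NNReal

noncomputable section

namespace AD

/-- Cubic ReLU activation. -/
def phi (z : ℝ) : ℝ := (max 0 z) ^ 3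

/-- Negative sigmoid `ψ(z) = 1/(1+e^z)`. -/
def psi (z : ℝ) : ℝ := 1 / (1 + Real.exp z)

/-- Logistic loss `ℓ(z) = log(1+e^{-z})`. -/
def lloss (z : ℝ) : ℝ := Real.log (1 + Real.exp (-z))

/-- Logistic sigmoid `σ(z) = 1/(1+e^{-z})`. -/
def sigm (z : ℝ) : ℝ := 1 / (1 + Real.exp (-z))

/-- Euclidean inner product on `Fin d → ℝ`. -/
def dot {d : ℕ} (a b : Fin d → ℝ) : ℝ := ∑ k, a k * b k

/-- Squared Euclidean norm. -/
def sqnorm {d : ℕ} (a : Fin d → ℝ) : ℝ := dot a a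

/-- First standard basis vector `e₁` (the learnable feature `u`). -/
def e1 (d : ℕ) (hd : 0 < d) : Fin d → ℝ := fun k => if k = (⟨0, hd⟩ : Fin d) then 1 else 0

/-- Last standard basis vector `e_d` (the unlearnable feature `v`). -/
def eLast (d : ℕ) (_hd : 0 < d) : Fin d → ℝ := fun k => if (k : ℕ) = d - 1 then 1 else 0

/-- The two-layer student network
`f_W(X) = ∑_r ∑_p [φ(⟨w_r,x_p⟩) − φ(−⟨w_r,x_p⟩)]`. -/
def netOut {m P d : ℕ} (w : Fin m → Fin d → ℝ) (X : Fin P → Fin d → ℝ) : ℝ :=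
  ∑ r, ∑ p, (phi (dot (w r) (X p)) - phi (-(dot (w r) (X p))))

/-- The concentration event `E` of the paper, i.e. properties (P1)–(P8), stated for
training patches `x`, initialization `w0`, labels `y` and signal-patch indices `sig`. -/
def EventEOn (N m P d : ℕ) (hd : 0 < d) (sigman sigma0 delta : ℝ)
    (y : Fin N → ℝ) (sig : Fin N → Fin P)
    (x : Fin N → Fin P → Fin d → ℝ) (w0 : Fin m → Fin d → ℝ) : Prop :=
  -- (P1) noise-patch norms
  (∀ i j, j ≠ sig i →
      sigman ^ 2 * d / 2 ≤ sqnorm (x i j) ∧ sqnorm (x i j) ≤ 3 * sigman ^ 2 * d / 2) ∧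
  -- (P2) pairwise noise inner products
  (∀ i k j q, j ≠ sig i → q ≠ sig k → ((i, j) : Fin N × Fin P) ≠ (k, q) →
      |dot (x i j) (x k q)| ≤
        2 * sigman ^ 2 * Real.sqrt ((d : ℝ) * Real.log ((16 : ℝ) * N ^ 2 * P ^ 2 / delta))) ∧
  -- (P3) sup-norm of noise patches
  (∀ i j, j ≠ sig i → ∀ kk : Fin d,
      |x i j kk| ≤ sigman * Real.sqrt (2 * Real.log ((16 : ℝ) * d * N * P / delta))) ∧
  -- (P4) initialization norms
  (∀ r, Real.sqrt (sqnorm (w0 r)) ≤ 2 * sigma0 * Real.sqrt d) ∧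
  -- (P5) initialization signal correlation
  (∀ r, |dot (w0 r) (e1 d hd)| ≤ sigma0 * Real.sqrt (2 * Real.log ((16 : ℝ) * m / delta))) ∧
  -- (P6) initialization noise correlations
  (∀ r i j, j ≠ sig i →
      |dot (w0 r) (x i j)| ≤
        2 * sigma0 * sigman * Real.sqrt ((d : ℝ) * Real.log ((16 : ℝ) * N * m * P / delta))) ∧
  -- (P7) maximal initial signal alignment
  (∃ r, sigma0 / 2 ≤ dot (w0 r) (e1 d hd)) ∧
  -- (P8) maximal initial noise alignment
  (∀ i j, j ≠ sig i → ∃ r, sigma0 * sigman * Real.sqrt d / 4 ≤ y i * dot (w0 r) (x i j))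
structure Setting where
  N : ℕ
  m : ℕ
  P : ℕ
  d : ℕ
  T : ℕ
  hN : 0 < N
  hm : 0 < m
  hP : 0 < P
  hd : 0 < d
  alpha : ℝ
  sigman : ℝ
  sigma0 : ℝ
  eta : ℝ
  eps : ℝ
  delta : ℝ
  halpha : 0 < alpha
  hsigman : 0 < sigman
  hsigma0 : 0 < sigma0
  heta : 0 < eta
  heps : 0 < eps
  hepsalpha : eps < alpha
  hdelta0 : 0 < delta
  hdelta1 : delta < 1
  /-- labels -/
  y : Fin N → ℝ
  hy : ∀ i, y i = 1 ∨ y i = -1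
  /-- signal patch index -/
  sig : Fin N → Fin P
  /-- learnable samples -/
  SL : Finset (Fin N)
  /-- unlearnable samples -/
  SU : Finset (Fin N)
  hunion : SL ∪ SU = Finset.univ
  hdisj : Disjoint SL SU
  /-- training patches -/
  x : Fin N → Fin P → Fin d → ℝ
  hsigL : ∀ i ∈ SL, x i (sig i) = (alpha * y i) • e1 d hd
  hsigU : ∀ i ∈ SU, x i (sig i) = (alpha * y i) • eLast d hd
  hnoiseU : ∀ i j, j ≠ sig i → dot (x i j) (e1 d hd) = 0
  hnoiseV : ∀ i j, j ≠ sig i → dot (x i j) (eLast d hd) = 0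
  /-- weight trajectory -/
  w : ℕ → Fin m → Fin d → ℝ
  hwperp : ∀ t r, dot (w t r) (eLast d hd) = 0
  /-- adversarial training examples at each iteration -/
  xadv : ℕ → Fin N → Fin P → Fin d → ℝ
  hadvnoise : ∀ t i j, j ≠ sig i → xadv t i j = x i j
  hadvspan : ∀ t i, ∃ c : ℝ, xadv t i (sig i) - x i (sig i) = c • x i (sig i)
  hadvlinf : ∀ t i p k, |xadv t i p k - x i p k| ≤ eps
  hadvlearn : ∀ t : ℕ, ∀ i ∈ SL,
    alpha - eps ≤ y i * dot (xadv t i (sig i)) (e1 d hd) ∧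
      y i * dot (xadv t i (sig i)) (e1 d hd) ≤ alpha

namespace Setting

variable (S : Setting)

/-- Adversarial margin `y_i f_{W^{(t)}}(X̃_i^{(t)})`. -/
def marg (t : ℕ) (i : Fin S.N) : ℝ := S.y i * netOut (S.w t) (S.xadv t i)

/-- Signal coordinate `w_{r,1}^{(t)}`. -/
def wsig (t : ℕ) (r : Fin S.m) : ℝ := S.w t r ⟨0, S.hd⟩

/-- Unlearnable fraction `p_un = |S_U|/N`. -/
def pun : ℝ := (S.SU.card : ℝ) / S.N

/-- The adversarial-training gradient-descent dynamics. -/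
def ATDyn : Prop :=
  ∀ t r, S.w (t + 1) r = S.w t r +
    (3 * S.eta / S.N) •
      ∑ i : Fin S.N, (psi (S.marg t i) * S.y i) •
        ∑ p : Fin S.P, (dot (S.w t r) (S.xadv t i p)) ^ 2 • S.xadv t i p

/-- The signed gradient weight of sample `i` at iteration `t` under adversarial
distillation from teacher logits `fT`. -/
def gAD (fT : Fin S.N → ℝ) (t : ℕ) (i : Fin S.N) : ℝ :=
  sigm (S.y i * fT i) * psi (S.marg t i) - sigm (-(S.y i * fT i)) * psi (-(S.marg t i))

/-- The adversarial-distillation gradient-descent dynamics. -/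
def ADDyn (fT : Fin S.N → ℝ) : Prop :=
  ∀ t r, S.w (t + 1) r = S.w t r +
    (3 * S.eta / S.N) •
      ∑ i : Fin S.N, (S.gAD fT t i * S.y i) •
        ∑ p : Fin S.P, (dot (S.w t r) (S.xadv t i p)) ^ 2 • S.xadv t i p

/-- Noise coefficients `ρ_{i,j,r}^{(t)}` (adversarial training). -/
def rho (i : Fin S.N) (j : Fin S.P) (r : Fin S.m) : ℕ → ℝ
  | 0 => 0
  | t + 1 => rho i j r t + (3 * S.eta / S.N) * psi (S.marg t i) * (dot (S.w t r) (S.x i j)) ^ 2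

/-- Noise coefficients under adversarial distillation. -/
def rhoAD (fT : Fin S.N → ℝ) (i : Fin S.N) (j : Fin S.P) (r : Fin S.m) : ℕ → ℝ
  | 0 => 0
  | t + 1 => rhoAD fT i j r t + (3 * S.eta / S.N) * S.gAD fT t i * (dot (S.w t r) (S.x i j)) ^ 2

/-- The event `E` for a setting. -/
def EventE : Prop :=
  EventEOn S.N S.m S.P S.d S.hd S.sigman S.sigma0 S.delta S.y S.sig S.x (S.w 0)

/-- Condition (H): the parameter requirements of Condition 4.1 of the paper
(without the unlearnable-fraction regime item, which is imposed separately). -/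
def CondH (C : ℝ) : Prop :=
  1 ≤ C ∧
  -- training horizon
  C * S.N / (S.eta * S.sigma0 * S.sigman ^ 3 * ((S.d : ℝ) * Real.sqrt S.d)) ≤ (S.T : ℝ) ∧
  -- dimension
  C * S.m ^ 2 * S.P ^ 2 * S.N ^ 2 *
      (Real.log ((S.T : ℝ) * S.N * S.m * S.P / S.delta)) ^ 4 ≤ (S.d : ℝ) ∧
  -- signal strength
  C * S.sigman * Real.sqrt S.d * Real.log ((S.T : ℝ) * S.N * S.m * S.P / S.delta) /
      (((S.N : ℝ) * (1 - S.pun)) ^ ((1 : ℝ) / 3)) ≤ S.alpha ∧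
  -- initialization scale
  S.sigma0 ≤
    C⁻¹ *
        min (min (1 / ((S.m : ℝ) ^ ((2 : ℝ) / 3) * (S.P : ℝ) ^ ((2 : ℝ) / 3) *
            S.sigman * Real.sqrt S.d))
          (1 / (S.alpha * (S.m : ℝ) ^ ((2 : ℝ) / 3))))
          (1 / (S.sigman * S.m ^ 2 * Real.sqrt S.P * S.d)) /
      Real.log ((S.T : ℝ) * S.d * S.N * S.m * S.P / S.delta) ∧
  -- learning rate
  S.eta ≤
    C⁻¹ * min (min (1 / (S.alpha ^ 3 * S.sigma0)) (1 / (S.sigman ^ 2 * S.d))) (1 / S.alpha ^ 2) /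
      Real.log ((S.T : ℝ) * S.N * S.m * S.P / S.delta) ∧
  -- adversarial budget
  C * S.sigman * S.m * Real.sqrt S.P * Real.log ((S.T : ℝ) * S.d * S.N * S.P / S.delta) ≤ S.eps ∧
  S.eps < C⁻¹ * min S.alpha (1 / (S.m * S.sigma0 * S.d)) ∧
  -- width and number of patches
  C * Real.log ((S.N : ℝ) * S.P / S.delta) ≤ (S.m : ℝ) ∧
  (S.m : ℝ) ≤ C * Real.log S.d ^ C ∧
  2 ≤ S.P ∧ (S.P : ℝ) ≤ C

/-- The sparse-unlearnable regime of Condition 4.1. -/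
def SparseRegime (C : ℝ) : Prop :=
  C / S.N ≤ S.pun ∧ S.pun ≤ C⁻¹ * Real.log S.d / S.N ∧
  C * S.m * S.P * Real.log ((S.T : ℝ) * S.d * S.N * S.m * S.P / S.delta) ≤ (S.N : ℝ)

/-- The noise-stability bound (NS) on learnable samples at iteration `t`. -/
def NS (t : ℕ) : Prop :=
  ∀ r : Fin S.m, ∀ i ∈ S.SL, ∀ j, j ≠ S.sig i →
    |dot (S.w t r) (S.x i j)| ≤
      3 * S.sigma0 * S.sigman *
          Real.sqrt ((S.d : ℝ) * Real.log ((16 : ℝ) * S.N * S.m * S.P / S.delta)) +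
        21 * S.pun * S.N * S.P * Real.log S.T ^ ((1 : ℝ) / 3) / Real.sqrt S.d *
          Real.sqrt (Real.log ((16 : ℝ) * S.N ^ 2 * S.P ^ 2 / S.delta))

/-- The signal-learning hitting time `T₀`. -/
def T0 (C0 : ℝ) : ℕ :=
  sInf {t : ℕ | ∃ r, C0 / (S.alpha * (S.m : ℝ) ^ ((1 : ℝ) / 3)) < S.wsig t r}

/-- Maximum of the noise coefficients over unlearnable noise patches. -/
def rhoMaxSU (t : ℕ) : ℝ :=
  sSup {z : ℝ | ∃ r : Fin S.m, ∃ k ∈ S.SU, ∃ q, q ≠ S.sig k ∧ z = S.rho k q r t}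

/-- Shifted noise coefficients `ρ̂_{i,j,r}^{(t)}`. -/
def rhoHat (i : Fin S.N) (j : Fin S.P) (r : Fin S.m) (t : ℕ) : ℝ :=
  S.rho i j r t + S.y i * dot (S.w 0 r) (S.x i j) / sqnorm (S.x i j)

/-- Maximum shifted noise coefficient over unlearnable noise patches. -/
def rhoHatMax (t : ℕ) : ℝ :=
  sSup {z : ℝ | ∃ r : Fin S.m, ∃ k ∈ S.SU, ∃ q, q ≠ S.sig k ∧ z = S.rhoHat k q r t}

/-- The noise-memorization hitting time `T₁`. -/
def T1 (C1 : ℝ) : ℕ :=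
  sInf {t : ℕ | C1 / (((S.m : ℝ) * S.P) ^ ((1 : ℝ) / 3) * S.sigman ^ 2 * S.d) < S.rhoHatMax t}

/-- The Good-Teacher horizon `T_max`. -/
def Tmax : ℝ :=
  S.N / (1000 * S.eta * S.m * S.P * S.sigma0 ^ 4 * S.sigman ^ 6 * (S.d : ℝ) ^ 3 *
    Real.log ((16 : ℝ) * S.N * S.m * S.P / S.delta) ^ 2)

end Setting

/-!
The difference `φ(z) - φ(-z)` is `z³`, so the margin is a sum of cubes of signed correlations
`y ⟨w_r, x_p⟩`. The bound on the signal weights makes each of the `m` signal cubes at most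
`C₀³ / m`, while Condition (H) turns the noise-stability bound into `104 / (mP)^{1/3}`, so that the
at most `mP` noise cubes add up to at most `104³`. Hence the margin is at most `2 C₀³` as soon as
`C₀ ≥ 104`, and `ψ` is antitone.
-/

section RealInequalities

theorem rpow_one_third_pow_three {a : ℝ} (ha : 0 ≤ a) : (a ^ ((1 : ℝ) / 3)) ^ 3 = a := by
  rw [one_div]
  exact_mod_cast Real.rpow_inv_natCast_pow ha three_ne_zero

theorem rpow_one_third_le_of_le_pow_three {a b : ℝ} (ha : 0 ≤ a) (hb : 0 ≤ b) (h : a ≤ b ^ 3) :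
    a ^ ((1 : ℝ) / 3) ≤ b := by
  rwa [← pow_le_pow_iff_left₀ (by positivity) hb three_ne_zero, rpow_one_third_pow_three ha]

theorem two_thirds_le_log {x : ℝ} (hx : 2 ≤ x) : 2 / 3 ≤ Real.log x := by
  linarith [Real.log_two_gt_d9, Real.log_le_log two_pos hx]

theorem sqrt_log_le_three_mul_log {x y : ℝ} (hx : 2 ≤ x) (hy : 0 < y) (hyx : y ≤ 16 * x ^ 2) :
    √(Real.log y) ≤ 3 * Real.log x := by
  have hlogx := two_thirds_le_log hx
  have hlogy : Real.log y ≤ 6 * Real.log x := by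
    calc Real.log y ≤ Real.log (2 ^ 4 * x ^ 2) := Real.log_le_log hy (by linarith)
      _ ≤ Real.log (x ^ 4 * x ^ 2) := by gcongr
      _ = 6 * Real.log x := by rw [← pow_add, Real.log_pow]; norm_num
  refine Real.sqrt_le_iff.mpr ⟨by positivity, ?_⟩
  nlinarith

theorem log_rpow_one_third_le {x y : ℝ} (hx : 2 ≤ x) (hy : 1 ≤ y) (hyx : y ≤ x) :
    Real.log y ^ ((1 : ℝ) / 3) ≤ 3 / 2 * Real.log x := by
  have hlogx := two_thirds_le_log hx
  refine rpow_one_third_le_of_le_pow_three (Real.log_nonneg hy) (by positivity) ?_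
  calc Real.log y ≤ Real.log x := Real.log_le_log (by positivity) hyx
    _ ≤ (3 / 2 * Real.log x) ^ 3 := by
        nlinarith [mul_nonneg (sub_nonneg.mpr hlogx) (sub_nonneg.mpr hlogx)]

end RealInequalities

section Network

theorem phi_sub_phi_neg (z : ℝ) : phi z - phi (-z) = z ^ 3 := by
  unfold phi
  rcases le_total 0 z with h | h
  · rw [max_eq_right h, max_eq_left (by linarith)]; ring
  · rw [max_eq_left h, max_eq_right (by linarith)]; ring

theorem psi_le_one (z : ℝ) : psi z ≤ 1 :=
  div_le_one_of_le₀ (by linarith [Real.exp_pos z]) (by positivity)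

theorem psi_antitone : Antitone psi := by
  intro a b h
  unfold psi
  gcongr

theorem dot_e1 {d : ℕ} (hd : 0 < d) (a : Fin d → ℝ) : dot a (e1 d hd) = a ⟨0, hd⟩ := by
  simp [dot, e1]

theorem dot_smul_right {d : ℕ} (c : ℝ) (a b : Fin d → ℝ) : dot a (c • b) = c * dot a b :=
  dotProduct_smul c a b

variable {m P d : ℕ} {w : Fin m → Fin d → ℝ} {X : Fin P → Fin d → ℝ}

theorem netOut_eq_sum_pow_three : netOut w X = ∑ r, ∑ p, dot (w r) (X p) ^ 3 := by
  simp only [netOut, phi_sub_phi_neg]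

theorem mul_netOut_le {s a b : ℝ} (hs : s ^ 3 = s) (p₀ : Fin P)
    (ha : ∀ r, s * dot (w r) (X p₀) ≤ a) (hb : ∀ r p, p ≠ p₀ → s * dot (w r) (X p) ≤ b) :
    s * netOut w X ≤ m * (a ^ 3 + (P - 1) * b ^ 3) := by
  have hcube : Monotone fun z : ℝ => z ^ 3 := (Odd.strictMono_pow (by decide)).monotone
  have hfilter (r : Fin m) :
      ∑ p, (s * dot (w r) (X p)) ^ 3 ≤ a ^ 3 + (P - 1) * b ^ 3 := by
    rw [Fintype.sum_eq_add_sum_compl p₀]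
    refine add_le_add (hcube (ha r)) ?_
    calc ∑ p ∈ {p₀}ᶜ, (s * dot (w r) (X p)) ^ 3
        ≤ ∑ _p ∈ ({p₀}ᶜ : Finset (Fin P)), b ^ 3 :=
          Finset.sum_le_sum fun p hp => hcube (hb r p (by simpa using hp))
      _ = (P - 1) * b ^ 3 := by
          rw [Finset.sum_const, nsmul_eq_mul, Finset.card_compl, Fintype.card_fin,
            Finset.card_singleton, Nat.cast_pred p₀.pos]
  calc s * netOut w X = ∑ r, ∑ p, (s * dot (w r) (X p)) ^ 3 := by
        simp only [netOut_eq_sum_pow_three, Finset.mul_sum, mul_pow, hs]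
    _ ≤ ∑ _r : Fin m, (a ^ 3 + (P - 1) * b ^ 3) := Finset.sum_le_sum fun r _ => hfilter r
    _ = m * (a ^ 3 + (P - 1) * b ^ 3) := by
        rw [Finset.sum_const, nsmul_eq_mul, Finset.card_univ, Fintype.card_fin]

end Network

namespace Setting

variable (S : Setting)

section Margin

theorem y_pow_three (i : Fin S.N) : S.y i ^ 3 = S.y i := by
  rcases S.hy i with h | h <;> norm_num [h]

theorem abs_y (i : Fin S.N) : |S.y i| = 1 := by
  rcases S.hy i with h | h <;> simp [h]

variable {S} {t : ℕ} {i : Fin S.N}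

theorem xadv_sig_eq_smul_e1 (hi : i ∈ S.SL) :
    S.xadv t i (S.sig i) = dot (S.xadv t i (S.sig i)) (e1 S.d S.hd) • e1 S.d S.hd := by
  obtain ⟨c, hc⟩ := S.hadvspan t i
  have hx : S.xadv t i (S.sig i) = ((c + 1) * (S.alpha * S.y i)) • e1 S.d S.hd := by
    rw [sub_eq_iff_eq_add.mp hc, S.hsigL i hi]
    module
  rw [hx, dot_e1]
  simp [e1]

theorem y_mul_dot_xadv_sig_le (hi : i ∈ S.SL) {r : Fin S.m} {a : ℝ} (ha : 0 ≤ a)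
    (hr : S.wsig t r ≤ a) :
    S.y i * dot (S.w t r) (S.xadv t i (S.sig i)) ≤ S.alpha * a := by
  obtain ⟨hlower, hupper⟩ := S.hadvlearn t i hi
  have hnonneg := (sub_pos.mpr S.hepsalpha).le.trans hlower
  rw [xadv_sig_eq_smul_e1 hi, dot_smul_right, dot_e1 _ (S.w t r), ← mul_assoc]
  exact (mul_le_mul_of_nonneg_left hr hnonneg).trans (mul_le_mul_of_nonneg_right hupper ha)

theorem y_mul_dot_xadv_noise_le {r : Fin S.m} {j : Fin S.P} (hj : j ≠ S.sig i) :
    S.y i * dot (S.w t r) (S.xadv t i j) ≤ |dot (S.w t r) (S.x i j)| := by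
  rw [S.hadvnoise t i j hj]
  simpa only [abs_mul, S.abs_y, one_mul] using le_abs_self (S.y i * dot (S.w t r) (S.x i j))

theorem marg_le (hi : i ∈ S.SL) {a b : ℝ} (ha : 0 ≤ a) (hsignal : ∀ r, S.wsig t r ≤ a)
    (hnoise : ∀ r j, j ≠ S.sig i → |dot (S.w t r) (S.x i j)| ≤ b) :
    S.marg t i ≤ S.m * ((S.alpha * a) ^ 3 + (S.P - 1) * b ^ 3) :=
  mul_netOut_le (S.y_pow_three i) (S.sig i) (fun r => y_mul_dot_xadv_sig_le hi ha (hsignal r))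
    fun r j hj => (y_mul_dot_xadv_noise_le hj).trans (hnoise r j hj)

theorem marg_le_two_mul_pow_three (hi : i ∈ S.SL) {c : ℝ} (hc : 0 ≤ c)
    (hsignal : ∀ r, S.wsig t r ≤ c / (S.alpha * (S.m : ℝ) ^ ((1 : ℝ) / 3)))
    (hnoise : ∀ r j, j ≠ S.sig i →
      |dot (S.w t r) (S.x i j)| ≤ c / ((S.m : ℝ) * S.P) ^ ((1 : ℝ) / 3)) :
    S.marg t i ≤ 2 * c ^ 3 := by
  have hα := S.halpha
  have hm : (0 : ℝ) < S.m := by exact_mod_cast S.hm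
  have hP : (0 : ℝ) < S.P := by exact_mod_cast S.hP
  have hsignal_cube :
      (S.alpha * (c / (S.alpha * (S.m : ℝ) ^ ((1 : ℝ) / 3)))) ^ 3 = c ^ 3 / S.m := by
    rw [← mul_div_assoc, mul_div_mul_left _ _ hα.ne', div_pow, rpow_one_third_pow_three hm.le]
  have hnoise_cube : (c / ((S.m : ℝ) * S.P) ^ ((1 : ℝ) / 3)) ^ 3 = c ^ 3 / (S.m * S.P) := by
    rw [div_pow, rpow_one_third_pow_three (by positivity)]
  calc S.marg t i
      ≤ S.m * (c ^ 3 / S.m + (S.P - 1) * (c ^ 3 / (S.m * S.P))) := by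
        rw [← hsignal_cube, ← hnoise_cube]
        exact marg_le hi (by positivity) hsignal hnoise
    _ ≤ S.m * (c ^ 3 / S.m + S.P * (c ^ 3 / (S.m * S.P))) := by gcongr; linarith
    _ = 2 * c ^ 3 := by field_simp; norm_num

end Margin

section NoiseBound

/-- The first term of the noise-stability bound (NS): the correlation of a weight vector with a
noise patch that is left over from the initialization. -/
def initNoiseBound : ℝ :=
  3 * S.sigma0 * S.sigman *
    √((S.d : ℝ) * Real.log ((16 : ℝ) * S.N * S.m * S.P / S.delta))

/-- The second term of the noise-stability bound (NS): the correlation that a noise patch of a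
learnable sample picks up from the memorized noise patches of the unlearnable samples. -/
def memorizedNoiseBound : ℝ :=
  21 * S.pun * S.N * S.P * Real.log S.T ^ ((1 : ℝ) / 3) / √S.d *
    √(Real.log ((16 : ℝ) * S.N ^ 2 * S.P ^ 2 / S.delta))

/-- The ratio `TNmP/δ`, whose logarithm enters Condition 4.1. -/
def logArg : ℝ := (S.T : ℝ) * S.N * S.m * S.P / S.delta

theorem pun_le_one : S.pun ≤ 1 :=
  div_le_one_of_le₀ (by exact_mod_cast card_finset_fin_le S.SU) (by positivity)

theorem T_mul_P_le_logArg : (S.T : ℝ) * S.P ≤ S.logArg := by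
  have hN : (1 : ℝ) ≤ S.N := by exact_mod_cast S.hN
  have hm : (1 : ℝ) ≤ S.m := by exact_mod_cast S.hm
  have hδ := S.hdelta0
  have hδ₁ := S.hdelta1
  calc (S.T : ℝ) * S.P = S.T * 1 * 1 * S.P / 1 := by ring
    _ ≤ S.logArg := by unfold logArg; gcongr

theorem N_mul_P_le_logArg (hT : (1 : ℝ) ≤ S.T) : (S.N : ℝ) * S.P ≤ S.logArg := by
  have hm : (1 : ℝ) ≤ S.m := by exact_mod_cast S.hm
  have hδ := S.hdelta0
  have hδ₁ := S.hdelta1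
  calc (S.N : ℝ) * S.P = 1 * S.N * 1 * S.P / 1 := by ring
    _ ≤ S.logArg := by unfold logArg; gcongr

theorem N_mul_m_mul_P_div_delta_le_logArg (hT : (1 : ℝ) ≤ S.T) :
    (S.N : ℝ) * S.m * S.P / S.delta ≤ S.logArg := by
  have hδ := S.hdelta0
  calc (S.N : ℝ) * S.m * S.P / S.delta = 1 * S.N * S.m * S.P / S.delta := by ring
    _ ≤ S.logArg := by unfold logArg; gcongr

namespace CondH

variable {S} {C : ℝ}

theorem one_le_T (h : S.CondH C) : (1 : ℝ) ≤ S.T := by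
  obtain ⟨hC, hT, -⟩ := h
  have hN := S.hN
  have hd := S.hd
  have hη := S.heta
  have hσ₀ := S.hsigma0
  have hσ := S.hsigman
  have hTpos : (0 : ℝ) < S.T := hT.trans_lt' (by positivity)
  exact_mod_cast hTpos

theorem two_le_P (h : S.CondH C) : (2 : ℝ) ≤ S.P := by
  obtain ⟨-, -, -, -, -, -, -, -, -, -, hP, -⟩ := h
  exact_mod_cast hP

theorem T_le_logArg (h : S.CondH C) : (S.T : ℝ) ≤ S.logArg :=
  (le_mul_of_one_le_right (by positivity) (one_le_two.trans h.two_le_P)).trans S.T_mul_P_le_logArg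

theorem two_le_logArg (h : S.CondH C) : 2 ≤ S.logArg := by
  refine le_trans ?_ S.T_mul_P_le_logArg
  nlinarith [h.one_le_T, h.two_le_P]

theorem log_logArg_pos (h : S.CondH C) : 0 < Real.log S.logArg :=
  Real.log_pos (one_lt_two.trans_le h.two_le_logArg)

theorem sqrt_log_init_le (h : S.CondH C) :
    √(Real.log ((16 : ℝ) * S.N * S.m * S.P / S.delta)) ≤ 3 * Real.log S.logArg := by
  have hN := S.hN
  have hm := S.hm
  have hP := S.hP
  have hδ := S.hdelta0
  refine sqrt_log_le_three_mul_log h.two_le_logArg (by positivity) ?_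
  calc (16 : ℝ) * S.N * S.m * S.P / S.delta = 16 * (S.N * S.m * S.P / S.delta) := by ring
    _ ≤ 16 * S.logArg := by gcongr; exact S.N_mul_m_mul_P_div_delta_le_logArg h.one_le_T
    _ ≤ 16 * S.logArg ^ 2 := by nlinarith [h.two_le_logArg]

theorem sqrt_log_memorized_le (h : S.CondH C) :
    √(Real.log ((16 : ℝ) * S.N ^ 2 * S.P ^ 2 / S.delta)) ≤ 3 * Real.log S.logArg := by
  have hN := S.hN
  have hm : (1 : ℝ) ≤ S.m := by exact_mod_cast S.hm
  have hP := S.hP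
  have hδ := S.hdelta0
  have hlogArg := h.two_le_logArg
  refine sqrt_log_le_three_mul_log hlogArg (by positivity) ?_
  calc (16 : ℝ) * S.N ^ 2 * S.P ^ 2 / S.delta
      = 16 * ((S.N * S.P) * (S.N * 1 * S.P / S.delta)) := by ring
    _ ≤ 16 * ((S.N * S.P) * (S.N * S.m * S.P / S.delta)) := by gcongr
    _ ≤ 16 * (S.logArg * S.logArg) := by
        gcongr
        · exact S.N_mul_P_le_logArg h.one_le_T
        · exact S.N_mul_m_mul_P_div_delta_le_logArg h.one_le_T
    _ = 16 * S.logArg ^ 2 := by ring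

theorem sigma0_le (h : S.CondH C) :
    S.sigma0 ≤ 1 / (((S.m : ℝ) * S.P) ^ ((1 : ℝ) / 3) * S.sigman * √S.d) / Real.log S.logArg := by
  have hmP : (1 : ℝ) ≤ S.m * S.P := by exact_mod_cast Nat.mul_pos S.hm S.hP
  have hd : (1 : ℝ) ≤ S.d := by exact_mod_cast S.hd
  have hσ := S.hsigman
  have hα := S.halpha
  have hpos : 0 < S.logArg := two_pos.trans_le h.two_le_logArg
  have hlog := h.log_logArg_pos
  have hlogArg : S.logArg ≤ (S.T : ℝ) * S.d * S.N * S.m * S.P / S.delta := by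
    calc S.logArg ≤ S.d * S.logArg := le_mul_of_one_le_left hpos.le hd
      _ = (S.T : ℝ) * S.d * S.N * S.m * S.P / S.delta := by unfold logArg; ring
  have hpow : ((S.m : ℝ) * S.P) ^ ((1 : ℝ) / 3) ≤
      (S.m : ℝ) ^ ((2 : ℝ) / 3) * (S.P : ℝ) ^ ((2 : ℝ) / 3) := by
    rw [← Real.mul_rpow (by positivity) (by positivity)]
    exact Real.rpow_le_rpow_of_exponent_le hmP (by norm_num)
  obtain ⟨hC, -, -, -, hσ₀, -⟩ := h
  have hscale : C⁻¹ * min (min (1 / ((S.m : ℝ) ^ ((2 : ℝ) / 3) * (S.P : ℝ) ^ ((2 : ℝ) / 3) *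
        S.sigman * √S.d)) (1 / (S.alpha * (S.m : ℝ) ^ ((2 : ℝ) / 3))))
        (1 / (S.sigman * S.m ^ 2 * √S.P * S.d)) ≤
      1 / (((S.m : ℝ) * S.P) ^ ((1 : ℝ) / 3) * S.sigman * √S.d) := by
    refine (mul_le_of_le_one_left (by positivity) (inv_le_one_of_one_le₀ hC)).trans ?_
    refine (min_le_left _ _).trans <| (min_le_left _ _).trans ?_
    gcongr
  exact hσ₀.trans (by gcongr)

theorem le_sqrt_d (h : S.CondH C) :
    ((S.m : ℝ) * S.P) ^ ((1 : ℝ) / 3) * (S.P * S.N * Real.log S.logArg ^ 2) ≤ √S.d := by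
  obtain ⟨-, -, hd, -, -, -, -, -, -, -, -, hPC⟩ := h
  have hm : (1 : ℝ) ≤ S.m := by exact_mod_cast S.hm
  have hP : (1 : ℝ) ≤ S.P := by exact_mod_cast S.hP
  have hpow : (((S.m : ℝ) * S.P) ^ ((1 : ℝ) / 3)) ^ 2 ≤ C * S.m ^ 2 := by
    calc (((S.m : ℝ) * S.P) ^ ((1 : ℝ) / 3)) ^ 2
        ≤ (((S.m : ℝ) * S.P) ^ ((1 : ℝ) / 3)) ^ 3 := by
          gcongr
          · exact Real.one_le_rpow (one_le_mul_of_one_le_of_one_le hm hP) (by norm_num)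
          · norm_num
      _ = (S.m : ℝ) * S.P := rpow_one_third_pow_three (by positivity)
      _ ≤ (S.m : ℝ) ^ 2 * C := by gcongr; exact le_self_pow₀ hm two_ne_zero
      _ = C * (S.m : ℝ) ^ 2 := mul_comm _ _
  refine Real.le_sqrt_of_sq_le ?_
  calc (((S.m : ℝ) * S.P) ^ ((1 : ℝ) / 3) * (S.P * S.N * Real.log S.logArg ^ 2)) ^ 2
      = (((S.m : ℝ) * S.P) ^ ((1 : ℝ) / 3)) ^ 2 *
          (S.P ^ 2 * S.N ^ 2 * Real.log S.logArg ^ 4) := by ring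
    _ ≤ C * S.m ^ 2 * (S.P ^ 2 * S.N ^ 2 * Real.log S.logArg ^ 4) := by gcongr
    _ = C * S.m ^ 2 * S.P ^ 2 * S.N ^ 2 * Real.log S.logArg ^ 4 := by ring
    _ ≤ S.d := hd

theorem initNoiseBound_le (h : S.CondH C) :
    S.initNoiseBound ≤ 9 / ((S.m : ℝ) * S.P) ^ ((1 : ℝ) / 3) := by
  have hd := S.hd
  have hσ := S.hsigman
  have hlog := h.log_logArg_pos
  unfold initNoiseBound
  rw [Real.sqrt_mul (by positivity)]
  calc 3 * S.sigma0 * S.sigman *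
        (√S.d * √(Real.log ((16 : ℝ) * S.N * S.m * S.P / S.delta)))
      ≤ 3 * (1 / (((S.m : ℝ) * S.P) ^ ((1 : ℝ) / 3) * S.sigman * √S.d) / Real.log S.logArg) *
          S.sigman * (√S.d * (3 * Real.log S.logArg)) := by
        gcongr
        · exact h.sigma0_le
        · exact h.sqrt_log_init_le
    _ = 9 / ((S.m : ℝ) * S.P) ^ ((1 : ℝ) / 3) := by field_simp; norm_num

theorem memorizedNoiseBound_le (h : S.CondH C) :
    S.memorizedNoiseBound ≤ 95 / ((S.m : ℝ) * S.P) ^ ((1 : ℝ) / 3) := by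
  have hN := S.hN
  have hm := S.hm
  have hP := S.hP
  have hlog := h.log_logArg_pos
  unfold memorizedNoiseBound
  calc 21 * S.pun * S.N * S.P * Real.log S.T ^ ((1 : ℝ) / 3) / √S.d *
        √(Real.log ((16 : ℝ) * S.N ^ 2 * S.P ^ 2 / S.delta))
      ≤ 21 * 1 * S.N * S.P * (3 / 2 * Real.log S.logArg) /
          (((S.m : ℝ) * S.P) ^ ((1 : ℝ) / 3) * (S.P * S.N * Real.log S.logArg ^ 2)) *
          (3 * Real.log S.logArg) := by
        gcongr
        · exact S.pun_le_one
        · exact log_rpow_one_third_le h.two_le_logArg h.one_le_T h.T_le_logArg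
        · exact h.le_sqrt_d
        · exact h.sqrt_log_memorized_le
    _ = (189 / 2) / ((S.m : ℝ) * S.P) ^ ((1 : ℝ) / 3) := by field_simp; norm_num
    _ ≤ 95 / ((S.m : ℝ) * S.P) ^ ((1 : ℝ) / 3) := by gcongr; norm_num

end CondH

variable {S} in
theorem NS.abs_dot_le {C : ℝ} {t : ℕ} (hNS : S.NS t) (h : S.CondH C) {i : Fin S.N}
    (hi : i ∈ S.SL) (r : Fin S.m) {j : Fin S.P} (hj : j ≠ S.sig i) :
    |dot (S.w t r) (S.x i j)| ≤ 104 / ((S.m : ℝ) * S.P) ^ ((1 : ℝ) / 3) :=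
  calc |dot (S.w t r) (S.x i j)| ≤ S.initNoiseBound + S.memorizedNoiseBound := hNS r i hi j hj
    _ ≤ 9 / ((S.m : ℝ) * S.P) ^ ((1 : ℝ) / 3) + 95 / ((S.m : ℝ) * S.P) ^ ((1 : ℝ) / 3) :=
      add_le_add h.initNoiseBound_le h.memorizedNoiseBound_le
    _ = 104 / ((S.m : ℝ) * S.P) ^ ((1 : ℝ) / 3) := by ring

end NoiseBound

end Setting

theorem stmt3_general {C₀ C : ℝ} (hC₀ : 104 ≤ C₀) {S : Setting} (hH : S.CondH C) {t : ℕ}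
    (hNS : S.NS t)
    (hsignal : ∀ r, S.wsig t r ≤ C₀ / (S.alpha * (S.m : ℝ) ^ ((1 : ℝ) / 3)))
    {i : Fin S.N} (hi : i ∈ S.SL) :
    1 / (1 + Real.exp (2 * C₀ ^ 3)) ≤ psi (S.marg t i) ∧ psi (S.marg t i) ≤ 1 := by
  have hnoise (r : Fin S.m) (j : Fin S.P) (hj : j ≠ S.sig i) :
      |dot (S.w t r) (S.x i j)| ≤ C₀ / ((S.m : ℝ) * S.P) ^ ((1 : ℝ) / 3) :=
    (hNS.abs_dot_le hH hi r hj).trans (by gcongr)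
  have hmarg : S.marg t i ≤ 2 * C₀ ^ 3 :=
    Setting.marg_le_two_mul_pow_three hi (by linarith) hsignal hnoise
  exact ⟨psi_antitone hmarg, psi_le_one _⟩

/-- Gradient bound on learnable samples. On the event `E`, under
Condition (H), if the noise-stability bound holds at iteration `t` and all signal
weights are below `C₀/(α m^{1/3})`, then on every learnable sample the negative
sigmoid of the adversarial margin is bounded between `1/(1+exp(2C₀³))` and `1`. -/
theorem stmt3 :
    ∃ C0 C : ℝ, 0 < C0 ∧ 0 < C ∧
      ∀ S : Setting, S.ATDyn → S.EventE → S.CondH C → (S.SU.Nonempty → S.SparseRegime C) →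
        ∀ t : ℕ, S.NS t →
          (∀ r, S.wsig t r ≤ C0 / (S.alpha * (S.m : ℝ) ^ ((1 : ℝ) / 3))) →
          ∀ i ∈ S.SL,
            1 / (1 + Real.exp (2 * C0 ^ 3)) ≤ psi (S.marg t i) ∧ psi (S.marg t i) ≤ 1 := by
  -- Condition (H) demands `2 ≤ P ≤ C`, so it would be unsatisfiable for `C < 2`.
  exact ⟨104, 200, by norm_num, by norm_num, fun S _ _ hH _ t hNS hsignal i hi =>
    stmt3_general le_rfl hH hNS hsignal hi⟩

end AD

end
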